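/- arXiv:1811.09274 — 2 statements merged into one kernel-verified Lean document; each statement's English description precedes it below -/
import Mathlib

section
/- Let M be a Maya diagram and k ≥ 1 an integer, and let p denote the cardinality of the (finite) symmetric difference M Δ (M + k). Then p ≥ k and p ≡ k (mod 2). In particular, a p-cyclic Maya diagram can only have positive shifts k of the same parity as p with k ≤ p. -/
/-- A Maya diagram: a set of integers containing finitely many nonnegative
integers and excluding finitely many negative integers. -/
def IsMaya (M : Set ℤ) : Prop :=
  {m : ℤ | m ∈ M ∧ 0 ≤ m}.Finite ∧ {m : ℤ | m < 0 ∧ m ∉ M}.Finite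

/-- The translate `M + k = {m + k : m ∈ M}`. -/
def shiftSet (M : Set ℤ) (k : ℤ) : Set ℤ := (fun m => m + k) '' M

/-!
For sets `A` and `B` with finite symmetric difference, the integer `#(A \ B) - #(B \ A)` is
additive along chains `A, B, C` and invariant under injections. For `A = M + k` and `B = M` it is
therefore the same for every Maya diagram `M`, and the vacuum `{m | m < 0}` gives the value `k`.
On the other hand `p` is the sum `#(A \ B) + #(B \ A)`, which bounds the absolute value of the
difference and has the same parity.
-/

section RelativeCharge

open scoped symmDiff

variable {α β : Type*} {A B C F : Set α}

/-- The charge of `A` relative to `B`, meaningful when `A ∆ B` is finite (`Set.ncard` is `0` on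
infinite sets). For a Maya diagram `A` and `B = {m | m < 0}` it is the usual charge (index)
of `A`. -/
noncomputable def relCharge (A B : Set α) : ℤ := (A \ B).ncard - (B \ A).ncard

theorem relCharge_swap (A B : Set α) : relCharge B A = -relCharge A B :=
  (neg_sub _ _).symm

theorem relCharge_image {f : α → β} (hf : f.Injective) (A B : Set α) :
    relCharge (f '' A) (f '' B) = relCharge A B := by
  simp only [relCharge, ← Set.image_sdiff hf, Set.ncard_image_of_injective _ hf]

theorem relCharge_eq_ncard_inter_sub (hF : F.Finite) (hAB : A ∆ B ⊆ F) :
    relCharge A B = (A ∩ F).ncard - (B ∩ F).ncard := by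
  obtain ⟨hA, hB⟩ := Set.union_subset_iff.mp hAB
  have hAF : (A ∩ F) \ B = A \ B := by
    rw [← Set.sdiff_inter_right_comm, Set.inter_eq_left.mpr hA]
  have hBF : (B ∩ F) \ A = B \ A := by
    rw [← Set.sdiff_inter_right_comm, Set.inter_eq_left.mpr hB]
  have hinter : A ∩ F ∩ B = B ∩ F ∩ A := by ac_rfl
  have hcardA := Set.ncard_inter_add_ncard_sdiff_eq_ncard (A ∩ F) B (hF.inter_of_right A)
  have hcardB := Set.ncard_inter_add_ncard_sdiff_eq_ncard (B ∩ F) A (hF.inter_of_right B)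
  rw [hAF, hinter] at hcardA
  rw [hBF] at hcardB
  unfold relCharge
  omega

theorem finite_symmDiff_trans (hAB : (A ∆ B).Finite) (hBC : (B ∆ C).Finite) : (A ∆ C).Finite :=
  (hAB.union hBC).subset (symmDiff_triangle A B C)

theorem relCharge_add_relCharge (hAB : (A ∆ B).Finite) (hBC : (B ∆ C).Finite) :
    relCharge A B + relCharge B C = relCharge A C := by
  have hF := hAB.union hBC
  rw [relCharge_eq_ncard_inter_sub hF Set.subset_union_left,
    relCharge_eq_ncard_inter_sub hF Set.subset_union_right,
    relCharge_eq_ncard_inter_sub hF (symmDiff_triangle A B C)]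
  ring

theorem finite_image_symmDiff_image {f : α → β} (hf : f.Injective) (hAB : (A ∆ B).Finite) :
    ((f '' A) ∆ (f '' B)).Finite := by
  rw [← Set.image_symmDiff hf]
  exact hAB.image f

theorem finite_image_symmDiff_self {f : α → α} (hf : f.Injective) (hAB : (A ∆ B).Finite)
    (hB : ((f '' B) ∆ B).Finite) : ((f '' A) ∆ A).Finite :=
  finite_symmDiff_trans (finite_image_symmDiff_image hf hAB)
    (finite_symmDiff_trans hB (symmDiff_comm A B ▸ hAB))

theorem relCharge_image_self_eq {f : α → α} (hf : f.Injective) (hAB : (A ∆ B).Finite)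
    (hB : ((f '' B) ∆ B).Finite) : relCharge (f '' A) A = relCharge (f '' B) B := by
  have hBA : (B ∆ A).Finite := symmDiff_comm A B ▸ hAB
  calc relCharge (f '' A) A
      = relCharge (f '' A) (f '' B) + (relCharge (f '' B) B + relCharge B A) := by
        rw [relCharge_add_relCharge hB hBA, relCharge_add_relCharge
          (finite_image_symmDiff_image hf hAB) (finite_symmDiff_trans hB hBA)]
    _ = relCharge (f '' B) B := by
        rw [relCharge_image hf, relCharge_swap A B]
        ring

theorem ncard_symmDiff_eq (hAB : (A ∆ B).Finite) :
    (A ∆ B).ncard = (A \ B).ncard + (B \ A).ncard :=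
  Set.ncard_union_eq disjoint_sdiff_sdiff (hAB.subset Set.subset_union_left)
    (hAB.subset Set.subset_union_right)

theorem abs_relCharge_le_ncard_symmDiff (hAB : (A ∆ B).Finite) :
    |relCharge A B| ≤ (A ∆ B).ncard := by
  rw [ncard_symmDiff_eq hAB, relCharge, abs_le]
  omega

theorem ncard_symmDiff_modEq_relCharge (hAB : (A ∆ B).Finite) :
    (A ∆ B).ncard ≡ relCharge A B [ZMOD 2] := by
  rw [ncard_symmDiff_eq hAB, relCharge, Int.modEq_iff_dvd]
  omega

end RelativeCharge

section Maya

open scoped symmDiff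

theorem Iio_sdiff_Iio_eq_Ico {α : Type*} [LinearOrder α] (a b : α) :
    Set.Iio a \ Set.Iio b = Set.Ico b a := by
  grind

theorem finite_Iio_symmDiff_Iio {α : Type*} [LinearOrder α] [LocallyFiniteOrder α] (a b : α) :
    (Set.Iio a ∆ Set.Iio b).Finite := by
  rw [Set.symmDiff_def, Iio_sdiff_Iio_eq_Ico, Iio_sdiff_Iio_eq_Ico]
  exact (Set.finite_Ico b a).union (Set.finite_Ico a b)

theorem relCharge_Iio_Iio (a b : ℤ) : relCharge (Set.Iio a) (Set.Iio b) = a - b := by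
  have ncard_Ico (c d : ℤ) : (Set.Ico c d).ncard = (d - c).toNat := by
    rw [← Finset.coe_Ico, Set.ncard_coe_finset, Int.card_Ico]
  rw [relCharge, Iio_sdiff_Iio_eq_Ico, Iio_sdiff_Iio_eq_Ico, ncard_Ico, ncard_Ico]
  omega

theorem shiftSet_Iio (a k : ℤ) : shiftSet (Set.Iio a) k = Set.Iio (a + k) :=
  Set.image_add_const_Iio k a

theorem IsMaya.finite_symmDiff_Iio_zero {M : Set ℤ} (hM : IsMaya M) :
    (M ∆ Set.Iio 0).Finite :=
  (hM.1.union hM.2).subset fun m hm => by grind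

theorem finite_shiftSet_Iio_symmDiff (a k : ℤ) :
    (shiftSet (Set.Iio a) k ∆ Set.Iio a).Finite :=
  shiftSet_Iio a k ▸ finite_Iio_symmDiff_Iio (a + k) a

theorem IsMaya.finite_shiftSet_symmDiff {M : Set ℤ} (hM : IsMaya M) (k : ℤ) :
    (shiftSet M k ∆ M).Finite :=
  finite_image_symmDiff_self (add_left_injective k) hM.finite_symmDiff_Iio_zero
    (finite_shiftSet_Iio_symmDiff 0 k)

theorem IsMaya.relCharge_shiftSet {M : Set ℤ} (hM : IsMaya M) (k : ℤ) :
    relCharge (shiftSet M k) M = k :=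
  calc relCharge (shiftSet M k) M
      = relCharge (shiftSet (Set.Iio 0) k) (Set.Iio 0) :=
        relCharge_image_self_eq (add_left_injective k) hM.finite_symmDiff_Iio_zero
          (finite_shiftSet_Iio_symmDiff 0 k)
    _ = k := by rw [shiftSet_Iio, relCharge_Iio_Iio, zero_add, sub_zero]

theorem cyclic_shift_bound_and_parity_general {M : Set ℤ} (hM : IsMaya M) (k : ℤ) :
    |k| ≤ (M ∆ shiftSet M k).ncard ∧ (M ∆ shiftSet M k).ncard ≡ k [ZMOD 2] := by
  have hfin := hM.finite_shiftSet_symmDiff k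
  have hbound := abs_relCharge_le_ncard_symmDiff hfin
  have hparity := ncard_symmDiff_modEq_relCharge hfin
  rw [hM.relCharge_shiftSet, symmDiff_comm] at hbound hparity
  exact ⟨hbound, hparity⟩

end Maya

/-- if `M` is a Maya diagram, `k ≥ 1`, and
`p = #(M ∆ (M+k))`, then `p ≥ k` and `p ≡ k (mod 2)`. -/
theorem cyclic_shift_bound_and_parity (M : Set ℤ) (hM : IsMaya M) (k : ℤ) (hk : 1 ≤ k)
    (p : ℕ) (hp : p = (symmDiff M (shiftSet M k)).ncard) :
    k ≤ (p : ℤ) ∧ (p : ℤ) % 2 = k % 2 := by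
  subst hp
  exact (cyclic_shift_bound_and_parity_general hM k).imp_left (le_abs_self k).trans
end

section
/- Let M be a Maya diagram and k ≥ 1 an integer such that the symmetric difference M Δ (M + k) has cardinality 5 (i.e., M is a non-degenerate 5-cyclic Maya diagram with shift k). Then k ∈ {1, 3, 5}; these are the only possible positive shifts for 5-cyclic Maya diagrams, corresponding to the signature classes (5), (3,1,1), (1,3,1), (1,1,3) and (1,1,1,1,1) of the A_4-Painlevé system. -/
/-!
For sets that differ in finitely many elements, the signed count `#(A \ B) - #(B \ A)` of `A`
against `B` satisfies the cocycle identity and is invariant under injective maps. A Maya diagram `M`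
differs finitely from the half-line `Iio 0`, and hence `M + k` from `Iio k`; by translation
invariance the two signed counts agree, so that of `M + k` against `M` equals that of `Iio k`
against `Iio 0`, namely `k`. Therefore `#(M ∆ (M + k)) = k + 2 * #(M \ (M + k))`, which is at least
`k` and has the parity of `k`.
-/

section RelCard

variable {α β : Type*} {A B C : Set α}

/-- The cardinality of `A` relative to `B`, the finite substitute for `#A - #B` when `A` and `B` are
infinite. It is meaningful when `symmDiff A B` is finite; otherwise an infinite difference counts
as `0`. -/
noncomputable def relCard (A B : Set α) : ℤ :=
  (A \ B).ncard - (B \ A).ncard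

theorem relCard_image {f : α → β} (hf : f.Injective) (A B : Set α) :
    relCard (f '' A) (f '' B) = relCard A B := by
  simp only [relCard, ← Set.image_sdiff hf, Set.ncard_image_of_injective _ hf]

theorem ncard_sdiff_eq_inter_add_union (h : (A \ B).Finite) (C : Set α) :
    (A \ B).ncard = ((A ∩ C) \ B).ncard + (A \ (B ∪ C)).ncard := by
  rw [← Set.ncard_inter_add_ncard_sdiff_eq_ncard (A \ B) C h, Set.sdiff_inter_right_comm,
    Set.sdiff_sdiff]

theorem relCard_add_relCard (hAB : (symmDiff A B).Finite) (hBC : (symmDiff B C).Finite) :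
    relCard A B + relCard B C = relCard A C := by
  have hAC : (symmDiff A C).Finite := hAB.symmDiff_congr.mpr hBC
  rw [Set.symmDiff_def, Set.finite_union] at hAB hBC hAC
  -- Once each of the six differences is split by the third set, the pieces cancel in pairs.
  simp only [relCard,
    ncard_sdiff_eq_inter_add_union hAB.1 C, ncard_sdiff_eq_inter_add_union hAB.2 C,
    ncard_sdiff_eq_inter_add_union hBC.1 A, ncard_sdiff_eq_inter_add_union hBC.2 A,
    ncard_sdiff_eq_inter_add_union hAC.1 B, ncard_sdiff_eq_inter_add_union hAC.2 B,
    Set.inter_comm C, Set.inter_comm B A, Set.union_comm C, Set.union_comm B A]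
  push_cast
  ring

theorem ncard_symmDiff_eq_relCard_add (h : (symmDiff A B).Finite) :
    ((symmDiff A B).ncard : ℤ) = relCard A B + 2 * (B \ A).ncard := by
  rw [Set.symmDiff_def, Set.finite_union] at h
  rw [Set.symmDiff_def, Set.ncard_union_eq disjoint_sdiff_sdiff h.1 h.2, relCard]
  push_cast
  ring

end RelCard

theorem finite_symmDiff_Iio_Iio {α : Type*} [LinearOrder α] [LocallyFiniteOrder α] (a b : α) :
    (symmDiff (Set.Iio a) (Set.Iio b)).Finite := by
  rw [Set.symmDiff_def, Set.Iio_sdiff_Iio, Set.Iio_sdiff_Iio]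
  exact (Set.finite_Ico _ _).union (Set.finite_Ico _ _)

theorem relCard_Iio_Iio (a b : ℤ) : relCard (Set.Iio a) (Set.Iio b) = a - b := by
  simp only [relCard, Set.Iio_sdiff_Iio, ← Finset.coe_Ico, Set.ncard_coe_finset, Int.card_Ico]
  omega

theorem shiftSet_Iio_zero (k : ℤ) : shiftSet (Set.Iio 0) k = Set.Iio k := by
  rw [shiftSet, Set.image_add_const_Iio, zero_add]

theorem relCard_shiftSet_shiftSet (A B : Set ℤ) (k : ℤ) :
    relCard (shiftSet A k) (shiftSet B k) = relCard A B :=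
  relCard_image (add_left_injective k) A B

namespace IsMaya

variable {M : Set ℤ}

theorem finite_symmDiff_Iio_zero_s19 (hM : IsMaya M) : (symmDiff M (Set.Iio 0)).Finite := by
  refine (hM.1.union hM.2).subset ?_
  rintro m (⟨hm, h0⟩ | ⟨h0, hm⟩)
  · exact .inl ⟨hm, not_lt.mp h0⟩
  · exact .inr ⟨h0, hm⟩

theorem finite_symmDiff_shiftSet_Iio (hM : IsMaya M) (k : ℤ) :
    (symmDiff (shiftSet M k) (Set.Iio k)).Finite := by
  rw [← shiftSet_Iio_zero, shiftSet, shiftSet, ← Set.image_symmDiff (add_left_injective k)]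
  exact hM.finite_symmDiff_Iio_zero_s19.image _

theorem finite_Iio_symmDiff (hM : IsMaya M) (k : ℤ) : (symmDiff (Set.Iio k) M).Finite := by
  rw [(finite_symmDiff_Iio_Iio k 0).symmDiff_congr, symmDiff_comm]
  exact hM.finite_symmDiff_Iio_zero_s19

theorem finite_symmDiff_shiftSet (hM : IsMaya M) (k : ℤ) :
    (symmDiff (shiftSet M k) M).Finite :=
  (hM.finite_symmDiff_shiftSet_Iio k).symmDiff_congr.mpr (hM.finite_Iio_symmDiff k)

theorem relCard_shiftSet (hM : IsMaya M) (k : ℤ) : relCard (shiftSet M k) M = k :=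
  calc
    relCard (shiftSet M k) M
      = relCard (shiftSet M k) (Set.Iio k) + relCard (Set.Iio k) M :=
        (relCard_add_relCard (hM.finite_symmDiff_shiftSet_Iio k) (hM.finite_Iio_symmDiff k)).symm
    _ = relCard M (Set.Iio 0) + relCard (Set.Iio k) M := by
        rw [← relCard_shiftSet_shiftSet M (Set.Iio 0) k, shiftSet_Iio_zero]
    _ = relCard (Set.Iio k) (Set.Iio 0) := by
        rw [add_comm, relCard_add_relCard (hM.finite_Iio_symmDiff k) hM.finite_symmDiff_Iio_zero_s19]
    _ = k := by rw [relCard_Iio_Iio, sub_zero]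

theorem ncard_symmDiff_shiftSet (hM : IsMaya M) (k : ℤ) :
    ((symmDiff M (shiftSet M k)).ncard : ℤ) = k + 2 * (M \ shiftSet M k).ncard := by
  rw [symmDiff_comm, ncard_symmDiff_eq_relCard_add (hM.finite_symmDiff_shiftSet k),
    hM.relCard_shiftSet]

end IsMaya

/-- a non-degenerate `5`-cyclic Maya diagram (`#(M ∆ (M+k)) = 5`)
with positive shift `k ≥ 1` must have `k ∈ {1, 3, 5}`. -/
theorem five_cyclic_shifts (M : Set ℤ) (hM : IsMaya M) (k : ℤ) (hk : 1 ≤ k)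
    (h5 : (symmDiff M (shiftSet M k)).ncard = 5) :
    k = 1 ∨ k = 3 ∨ k = 5 := by
  have hcard := hM.ncard_symmDiff_shiftSet k
  rw [h5] at hcard
  omega
end
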